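/- Assume the discrete entropy equation holds for all test functions ω ∈ V. Then, taking ω = 1, one obtains the discrete entropy production balance ∫_Ω (s^{n+1} − sⁿ)/τ dx = D_h + ∫_Ω Qⁿ/θ^{n+1} dx, where D_h := ∫_Ω [Mⁿ(μ^{n+1})²/(θⁿ θ^{n+1}) + Kⁿ|∇θ^{n+1}|²/((θⁿ)³ θ^{n+1}) + ηⁿ|Du^{n+1}|²/θ^{n+1}] dx satisfies D_h ≥ 0. In particular, if Qⁿ ≥ 0 almost everywhere, then ∫_Ω s^{n+1} dx ≥ ∫_Ω sⁿ dx. -/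

import Mathlib

/-!
Testing the discrete entropy equation with `ω = 1` removes every term containing `∇ω`, and the
terms that remain are the three contributions to `D_h` and the heat source. Merging the three
integrals into one requires each of them to be integrable, as does splitting
`∫ (s^{n+1} - sⁿ)` into a difference. The integrands of `D_h` are built from continuous functions and
first derivatives of Lipschitz functions by sums and products, hence are measurable and bounded on
the box (`BddMeas`), which has finite measure. The entropy densities have the same property
(`BddMeas.sdisc`): `∂_θ f (φ, θ)` is continuous since `θ > 0` keeps `(φ, θ)` in the open set where `f` is `C²`,
and `G (∇φ)` is bounded since `∇φ` takes values in a compact cube.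
The integrand of `D_h` is pointwise nonnegative, and with `Qⁿ ≥ 0` the balance gives the growth of
total entropy.
-/

open MeasureTheory

noncomputable section

/-- `i`-th spatial partial derivative of a scalar field. -/
def pd {d : ℕ} (i : Fin d) (g : (Fin d → ℝ) → ℝ) (x : Fin d → ℝ) : ℝ :=
  fderiv ℝ g x (Pi.single i 1)

/-- Spatial gradient of a scalar field. -/
def grad {d : ℕ} (g : (Fin d → ℝ) → ℝ) (x : Fin d → ℝ) : Fin d → ℝ :=
  fun i => pd i g x

/-- Divergence of a vector field. -/
def divg {d : ℕ} (u : (Fin d → ℝ) → Fin d → ℝ) (x : Fin d → ℝ) : ℝ :=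
  ∑ i, pd i (fun y => u y i) x

/-- Euclidean dot product. -/
def dot {d : ℕ} (a b : Fin d → ℝ) : ℝ := ∑ i, a i * b i

/-- Time derivative of a time-dependent scalar field. -/
def dt {d : ℕ} (g : ℝ → (Fin d → ℝ) → ℝ) (t : ℝ) (x : Fin d → ℝ) : ℝ :=
  deriv (fun s => g s x) t

/-- The box `Ω = [0, L₁] × ⋯ × [0, L_d]`. -/
def box {d : ℕ} (L : Fin d → ℝ) : Set (Fin d → ℝ) :=
  Set.univ.pi fun i => Set.Icc 0 (L i)

/-- Spatial periodicity with periods `L`. -/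
def SpacePeriodic {d : ℕ} (L : Fin d → ℝ) (g : (Fin d → ℝ) → ℝ) : Prop :=
  ∀ x i, g (x + Pi.single i (L i)) = g x

/-- Entropy density `s = -G(∇φ) - ∂_θ f(φ, θ)`. -/
def entS {d : ℕ} (G : (Fin d → ℝ) → ℝ) (f : ℝ → ℝ → ℝ)
    (φ θ : ℝ → (Fin d → ℝ) → ℝ) (t : ℝ) (x : Fin d → ℝ) : ℝ :=
  -G (grad (φ t) x) - deriv (f (φ t x)) (θ t x)

/-- Internal energy density `e = f(φ, θ) - θ ∂_θ f(φ, θ)`. -/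
def intE {d : ℕ} (f : ℝ → ℝ → ℝ) (φ θ : ℝ → (Fin d → ℝ) → ℝ)
    (t : ℝ) (x : Fin d → ℝ) : ℝ :=
  f (φ t x) (θ t x) - θ t x * deriv (f (φ t x)) (θ t x)

/-- Total energy density `e_tot = e + |u|²/2`. -/
def totE {d : ℕ} (f : ℝ → ℝ → ℝ) (φ θ : ℝ → (Fin d → ℝ) → ℝ)
    (u : ℝ → (Fin d → ℝ) → Fin d → ℝ) (t : ℝ) (x : Fin d → ℝ) : ℝ :=
  intE f φ θ t x + (1 / 2) * ∑ i, (u t x i) ^ 2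

/-- Chemical potential `μ = -θ div(∇G(∇φ)) + ∂_φ f(φ, θ)`. -/
def chemMu {d : ℕ} (G : (Fin d → ℝ) → ℝ) (f : ℝ → ℝ → ℝ)
    (φ θ : ℝ → (Fin d → ℝ) → ℝ) (t : ℝ) (x : Fin d → ℝ) : ℝ :=
  -θ t x * divg (fun y => grad G (grad (φ t) y)) x
    + deriv (fun a => f a (θ t x)) (φ t x)

/-- Korteweg stress `σ̃ᵢⱼ = θ (∇G(∇φ))ᵢ ∂ⱼφ`. -/
def korteweg {d : ℕ} (G : (Fin d → ℝ) → ℝ)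
    (φ θ : ℝ → (Fin d → ℝ) → ℝ) (t : ℝ) (x : Fin d → ℝ) (i j : Fin d) : ℝ :=
  θ t x * grad G (grad (φ t) x) i * pd j (φ t) x

/-- Symmetric gradient `Dw = (∇w + (∇w)ᵀ)/2` of a (spatial) vector field. -/
def symGrad {d : ℕ} (w : (Fin d → ℝ) → Fin d → ℝ) (x : Fin d → ℝ) (i j : Fin d) : ℝ :=
  (pd i (fun y => w y j) x + pd j (fun y => w y i) x) / 2

/-- Entropy density at a discrete time level. -/
def sdisc {d : ℕ} (G : (Fin d → ℝ) → ℝ) (f : ℝ → ℝ → ℝ)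
    (φ θ : (Fin d → ℝ) → ℝ) (x : Fin d → ℝ) : ℝ :=
  -G (grad φ x) - deriv (f (φ x)) (θ x)

/-- Internal energy density at a discrete time level. -/
def ediscr {d : ℕ} (f : ℝ → ℝ → ℝ) (φ θ : (Fin d → ℝ) → ℝ) (x : Fin d → ℝ) : ℝ :=
  f (φ x) (θ x) - θ x * deriv (f (φ x)) (θ x)

/-- Measurable on the whole space and bounded on the box `[0, L₁] × ⋯ × [0, L_d]`. -/
def BddMeas {d : ℕ} (L : Fin d → ℝ) (g : (Fin d → ℝ) → ℝ) : Prop :=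
  Measurable g ∧ ∃ C, ∀ x ∈ box L, |g x| ≤ C

lemma isCompact_box {d : ℕ} (L : Fin d → ℝ) : IsCompact (box L) :=
  isCompact_univ_pi fun _ => isCompact_Icc

namespace BddMeas

variable {d : ℕ} {L : Fin d → ℝ} {g h : (Fin d → ℝ) → ℝ}

lemma integrableOn (hg : BddMeas L g) : IntegrableOn g (box L) := by
  obtain ⟨hm, C, hC⟩ := hg
  refine Measure.integrableOn_of_bounded (M := C) (isCompact_box L).measure_lt_top.ne
    hm.aestronglyMeasurable ?_
  filter_upwards [ae_restrict_mem (isCompact_box L).measurableSet] with x hx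
  exact hC x hx

lemma of_continuous (hg : Continuous g) : BddMeas L g :=
  ⟨hg.measurable, (isCompact_box L).exists_bound_of_continuousOn hg.continuousOn⟩

lemma add (hg : BddMeas L g) (hh : BddMeas L h) : BddMeas L fun x => g x + h x := by
  obtain ⟨hm, C, hC⟩ := hg
  obtain ⟨hm', C', hC'⟩ := hh
  exact ⟨hm.add hm', C + C', fun x hx =>
    (abs_add_le _ _).trans (add_le_add (hC x hx) (hC' x hx))⟩

lemma mul (hg : BddMeas L g) (hh : BddMeas L h) : BddMeas L fun x => g x * h x := by
  obtain ⟨hm, C, hC⟩ := hg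
  obtain ⟨hm', C', hC'⟩ := hh
  refine ⟨hm.mul hm', C * C', fun x hx => ?_⟩
  rw [abs_mul]
  exact mul_le_mul (hC x hx) (hC' x hx) (abs_nonneg _) ((abs_nonneg _).trans (hC x hx))

lemma sum {ι : Type*} (s : Finset ι) {g : ι → (Fin d → ℝ) → ℝ} (hg : ∀ i, BddMeas L (g i)) :
    BddMeas L fun x => ∑ i ∈ s, g i x := by
  classical
  induction s using Finset.induction_on with
  | empty => simpa using of_continuous (L := L) (continuous_const (y := (0 : ℝ)))
  | insert a s ha ih => simpa [Finset.sum_insert ha] using (hg a).add ih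

/-- A Lipschitz constant bounds the derivative where it exists; elsewhere `fderiv` is `0`. -/
lemma pd {C : NNReal} (hg : LipschitzWith C g) (i : Fin d) : BddMeas L (pd i g) := by
  refine ⟨measurable_fderiv_apply_const ℝ g _, C * ‖(Pi.single i 1 : Fin d → ℝ)‖, fun x _ => ?_⟩
  refine ((fderiv ℝ g x).le_opNorm _).trans ?_
  gcongr
  exact norm_fderiv_le_of_lipschitz ℝ hg

/-- On the box the gradient of a Lipschitz function stays in a compact cube, where `G` is bounded. -/
lemma comp_grad {C : NNReal} (hg : LipschitzWith C g) {G : (Fin d → ℝ) → ℝ} (hG : Continuous G) :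
    BddMeas L fun x => G (grad g x) := by
  have hp : ∀ i, BddMeas L (_root_.pd i g) := fun i => pd hg i
  refine ⟨hG.measurable.comp (measurable_pi_lambda _ fun i => (hp i).1), ?_⟩
  choose B hB using fun i => (hp i).2
  obtain ⟨R, hR⟩ := (isCompact_univ_pi fun i => isCompact_Icc (a := -B i) (b := B i)
    ).exists_bound_of_continuousOn hG.continuousOn
  exact ⟨R, fun x hx => hR _ fun i _ => abs_le.1 (hB i x hx)⟩

/-- Positivity of `θ` keeps `(φ, θ)` in the open set where `f` is `C²`, so `∂_θ f (φ, θ)` is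
continuous; the gradient part is `comp_grad`. -/
lemma sdisc {G : (Fin d → ℝ) → ℝ} (hG : Continuous G) {f : ℝ → ℝ → ℝ}
    (hf : ContDiffOn ℝ 2 (fun q : ℝ × ℝ => f q.1 q.2) (Set.univ ×ˢ Set.Ioi 0))
    {φ θ : (Fin d → ℝ) → ℝ} {C : NNReal} (hφ : LipschitzWith C φ) (hθ : Continuous θ)
    (hpos : ∀ x, 0 < θ x) : BddMeas L (sdisc G f φ θ) := by
  have ho : IsOpen ((Set.univ : Set ℝ) ×ˢ Set.Ioi (0 : ℝ)) := isOpen_univ.prod isOpen_Ioi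
  have hmem : ∀ x, (φ x, θ x) ∈ (Set.univ : Set ℝ) ×ˢ Set.Ioi (0 : ℝ) := fun x => ⟨trivial, hpos x⟩
  have hd : ∀ x, deriv (f (φ x)) (θ x)
      = fderiv ℝ (fun q : ℝ × ℝ => f q.1 q.2) (φ x, θ x) (0, 1) := fun x => by
    have h1 := ((hf.differentiableOn (by norm_num)).differentiableAt
      (ho.mem_nhds (hmem x))).hasFDerivAt
    have h2 : HasDerivAt (fun b : ℝ => (φ x, b)) ((0 : ℝ), (1 : ℝ)) (θ x) :=
      (hasDerivAt_const _ _).prodMk (hasDerivAt_id _)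
    exact (h1.comp_hasDerivAt (θ x) h2).deriv
  have hc : Continuous fun x => fderiv ℝ (fun q : ℝ × ℝ => f q.1 q.2) (φ x, θ x) (0, 1) :=
    ((hf.continuousOn_fderiv_of_isOpen ho (by norm_num)).comp_continuous
      (hφ.continuous.prodMk hθ) hmem).clm_apply continuous_const
  have := (comp_grad (L := L) hφ hG.neg).add (of_continuous hc.neg)
  convert this using 2 with x
  simp only [Pi.neg_apply, ← hd]
  exact sub_eq_add_neg _ _

end BddMeas

/-- discrete entropy production balance (test function ω = 1). -/
theorem discrete_entropy_production_balance
    {d : ℕ} (hd : d = 1 ∨ d = 2 ∨ d = 3)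
    (L : Fin d → ℝ) (hL : ∀ i, 0 < L i)
    (G : (Fin d → ℝ) → ℝ) (hG : ContDiff ℝ 2 G)
    (f : ℝ → ℝ → ℝ)
    (hf : ContDiffOn ℝ 2 (fun q : ℝ × ℝ => f q.1 q.2) (Set.univ ×ˢ Set.Ioi 0))
    (M K η : ℝ → ℝ → ℝ)
    (hM : Continuous fun q : ℝ × ℝ => M q.1 q.2) (hMpos : ∀ a b, 0 < M a b)
    (hK : Continuous fun q : ℝ × ℝ => K q.1 q.2) (hKpos : ∀ a b, 0 < K a b)
    (hη : Continuous fun q : ℝ × ℝ => η q.1 q.2) (hηpos : ∀ a b, 0 < η a b)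
    (V : Submodule ℝ ((Fin d → ℝ) → ℝ)) (hVfin : FiniteDimensional ℝ V)
    (hVlip : ∀ g ∈ V, ∃ C : NNReal, LipschitzWith C g)
    (hVper : ∀ g ∈ V, SpacePeriodic L g)
    (hVone : (fun _ => (1 : ℝ)) ∈ V)
    (τ : ℝ) (hτ : 0 < τ)
    (φn θn φn1 μn1 θn1 : (Fin d → ℝ) → ℝ)
    (hφn : φn ∈ V) (hθn : θn ∈ V) (hφn1 : φn1 ∈ V) (hμn1 : μn1 ∈ V) (hθn1 : θn1 ∈ V)
    (hθnpos : ∀ x, 0 < θn x) (hθn1pos : ∀ x, 0 < θn1 x)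
    (un1 : (Fin d → ℝ) → Fin d → ℝ)
    (hun1lip : ∃ C : NNReal, LipschitzWith C un1)
    (hun1per : ∀ j, SpacePeriodic L fun x => un1 x j)
    (Qn : (Fin d → ℝ) → ℝ) (hQnmeas : Measurable Qn) (hQnbdd : ∃ C, ∀ x, |Qn x| ≤ C)
    -- the discrete entropy equation, for every test function ω ∈ V
    (hDES : ∀ ω ∈ V,
      (∫ x in box L, (sdisc G f φn1 θn1 x - sdisc G f φn θn x) / τ * ω x)
        = (∫ x in box L,
            M (φn x) (θn x) / (θn x * θn1 x) * (μn1 x) ^ 2 * ω x)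
          + (∫ x in box L,
              η (φn x) (θn x) / θn1 x * (∑ i, ∑ j, (symGrad un1 x i j) ^ 2) * ω x)
          + (∫ x in box L, K (φn x) (θn x) / (θn x) ^ 2 *
              ∑ i, pd i θn1 x *
                (ω x / (θn1 x * θn x) * pd i θn1 x - (θn x)⁻¹ * pd i ω x))
          + (∫ x in box L, Qn x * ω x / θn1 x)
          + ∫ x in box L, ∑ i,
              (grad G (grad φn x) i * ((φn1 x - φn x) / τ)
                + grad G (grad φn x) i * dot (grad φn x) (un1 x)
                + sdisc G f φn θn x * un1 x i) * pd i ω x)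
    :
    (∫ x in box L, (sdisc G f φn1 θn1 x - sdisc G f φn θn x) / τ)
        = (∫ x in box L,
            (M (φn x) (θn x) * (μn1 x) ^ 2 / (θn x * θn1 x)
              + K (φn x) (θn x) * (∑ i, (pd i θn1 x) ^ 2) / ((θn x) ^ 3 * θn1 x)
              + η (φn x) (θn x) * (∑ i, ∑ j, (symGrad un1 x i j) ^ 2) / θn1 x))
          + ∫ x in box L, Qn x / θn1 x ∧
    0 ≤ ∫ x in box L,
          (M (φn x) (θn x) * (μn1 x) ^ 2 / (θn x * θn1 x)
            + K (φn x) (θn x) * (∑ i, (pd i θn1 x) ^ 2) / ((θn x) ^ 3 * θn1 x)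
            + η (φn x) (θn x) * (∑ i, ∑ j, (symGrad un1 x i j) ^ 2) / θn1 x) ∧
    ((∀ᵐ x ∂(volume.restrict (box L)), 0 ≤ Qn x) →
      (∫ x in box L, sdisc G f φn θn x) ≤ ∫ x in box L, sdisc G f φn1 θn1 x) := by
  have lip : ∀ {g}, g ∈ V → Continuous g := fun hg => (hVlip _ hg).choose_spec.continuous
  have cφ := lip hφn
  have cθ := lip hθn
  have cθ' := lip hθn1
  have cμ := lip hμn1
  have nθ : ∀ x, θn x ≠ 0 := fun x => (hθnpos x).ne'
  have nθ' : ∀ x, θn1 x ≠ 0 := fun x => (hθn1pos x).ne'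
  have cM : Continuous fun x => M (φn x) (θn x) := hM.comp (cφ.prodMk cθ)
  have cK : Continuous fun x => K (φn x) (θn x) := hK.comp (cφ.prodMk cθ)
  have cη : Continuous fun x => η (φn x) (θn x) := hη.comp (cφ.prodMk cθ)
  have bs : BddMeas L (sdisc G f φn θn) :=
    .sdisc hG.continuous hf (hVlip _ hφn).choose_spec cθ hθnpos
  have bs' : BddMeas L (sdisc G f φn1 θn1) :=
    .sdisc hG.continuous hf (hVlip _ hφn1).choose_spec cθ' hθn1pos
  have bθ : ∀ i, BddMeas L (pd i θn1) := BddMeas.pd (hVlip _ hθn1).choose_spec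
  have bD : ∀ i j, BddMeas L fun x => symGrad un1 x i j := by
    obtain ⟨C, hC⟩ := hun1lip
    have hu : ∀ j, LipschitzWith C fun x => un1 x j := fun j => by
      simpa [Function.comp_def] using (LipschitzWith.eval (α := fun _ : Fin d => ℝ) j).comp hC
    intro i j
    exact ((BddMeas.pd (hu j) i).add (BddMeas.pd (hu i) j)).mul
      (.of_continuous (continuous_const (y := (2 : ℝ)⁻¹)))
  have b1 : BddMeas L fun x => M (φn x) (θn x) * (μn1 x) ^ 2 / (θn x * θn1 x) :=
    .of_continuous ((cM.mul (cμ.pow 2)).div (cθ.mul cθ') fun x => mul_ne_zero (nθ x) (nθ' x))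
  have b2 : BddMeas L fun x =>
      K (φn x) (θn x) * (∑ i, (pd i θn1 x) ^ 2) / ((θn x) ^ 3 * θn1 x) := by
    have hs : BddMeas L fun x => ∑ i, (pd i θn1 x) ^ 2 :=
      .sum _ fun i => by simpa only [pow_two] using (bθ i).mul (bθ i)
    exact ((BddMeas.of_continuous cK).mul hs).mul (.of_continuous
      (((cθ.pow 3).mul cθ').inv₀ fun x => mul_ne_zero (pow_ne_zero _ (nθ x)) (nθ' x)))
  have b3 : BddMeas L fun x =>
      η (φn x) (θn x) * (∑ i, ∑ j, (symGrad un1 x i j) ^ 2) / θn1 x := by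
    have hs : BddMeas L fun x => ∑ i, ∑ j, (symGrad un1 x i j) ^ 2 :=
      .sum _ fun i => .sum _ fun j => by simpa only [pow_two] using (bD i j).mul (bD i j)
    exact ((BddMeas.of_continuous cη).mul hs).mul (.of_continuous (cθ'.inv₀ nθ'))
  have hpd : ∀ (i : Fin d) x, pd i (fun _ => (1 : ℝ)) x = 0 := fun i x => by simp [pd]
  have hbal := hDES _ hVone
  simp only [hpd, mul_one, mul_zero, sub_zero, Finset.sum_const_zero, integral_zero,
    add_zero] at hbal
  have e1 : ∀ x, M (φn x) (θn x) / (θn x * θn1 x) * (μn1 x) ^ 2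
      = M (φn x) (θn x) * (μn1 x) ^ 2 / (θn x * θn1 x) := fun x => by ring
  have e3 : ∀ x, η (φn x) (θn x) / θn1 x * (∑ i, ∑ j, (symGrad un1 x i j) ^ 2)
      = η (φn x) (θn x) * (∑ i, ∑ j, (symGrad un1 x i j) ^ 2) / θn1 x := fun x => by ring
  have e2 : ∀ x, K (φn x) (θn x) / (θn x) ^ 2 *
        ∑ i, pd i θn1 x * (1 / (θn1 x * θn x) * pd i θn1 x)
      = K (φn x) (θn x) * (∑ i, (pd i θn1 x) ^ 2) / ((θn x) ^ 3 * θn1 x) := fun x => by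
    rw [show ∑ i, pd i θn1 x * (1 / (θn1 x * θn x) * pd i θn1 x)
        = 1 / (θn1 x * θn x) * ∑ i, (pd i θn1 x) ^ 2 by
      rw [Finset.mul_sum]; exact Finset.sum_congr rfl fun i _ => by ring]
    have := nθ x
    have := nθ' x
    field_simp
  simp only [e1, e2, e3] at hbal
  have hmerge := integral_add (b1.add b2).integrableOn b3.integrableOn
  rw [integral_add b1.integrableOn b2.integrableOn] at hmerge
  have hA : (∫ x in box L, (sdisc G f φn1 θn1 x - sdisc G f φn θn x) / τ)
        = (∫ x in box L,
            (M (φn x) (θn x) * (μn1 x) ^ 2 / (θn x * θn1 x)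
              + K (φn x) (θn x) * (∑ i, (pd i θn1 x) ^ 2) / ((θn x) ^ 3 * θn1 x)
              + η (φn x) (θn x) * (∑ i, ∑ j, (symGrad un1 x i j) ^ 2) / θn1 x))
          + ∫ x in box L, Qn x / θn1 x := by
    rw [hbal, hmerge]; ring
  have hB : 0 ≤ ∫ x in box L,
          (M (φn x) (θn x) * (μn1 x) ^ 2 / (θn x * θn1 x)
            + K (φn x) (θn x) * (∑ i, (pd i θn1 x) ^ 2) / ((θn x) ^ 3 * θn1 x)
            + η (φn x) (θn x) * (∑ i, ∑ j, (symGrad un1 x i j) ^ 2) / θn1 x) := by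
    refine integral_nonneg fun x => ?_
    have := hMpos (φn x) (θn x)
    have := hKpos (φn x) (θn x)
    have := hηpos (φn x) (θn x)
    have := hθnpos x
    have := hθn1pos x
    simp only [Pi.zero_apply]
    positivity
  refine ⟨hA, hB, fun hQ => ?_⟩
  have hC : 0 ≤ ∫ x in box L, Qn x / θn1 x :=
    integral_nonneg_of_ae (hQ.mono fun x hx => div_nonneg hx (hθn1pos x).le)
  have hD := add_nonneg hB hC
  rw [← hA, integral_div, integral_sub bs'.integrableOn bs.integrableOn] at hD
  have := mul_nonneg hD hτ.le
  rw [div_mul_cancel₀ _ hτ.ne'] at this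
  linarith
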